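/- arXiv:0710.2781 — 2 statements merged into one kernel-verified Lean document; each statement's English description precedes it below -/
import Mathlib

section
/- For every i >= 0, the patch P_i of the Rauzy tiling contains no acute isolated vertex: every vertex of P_i that lies on exactly one rhombus of P_i sits at an obtuse corner of that rhombus. -/
/-!
The Rauzy tiling, built recursively from the Rauzy substitution, together with the
combinatorics of its patches `P_i` (corners, edges, sides, acute/obtuse corners).
-/

noncomputable section

/-- The projections `proj(e₁), proj(e₂), proj(e₃)` of the standard basis vectors of
`ℝ³` to the plane. -/
def pe : Fin 3 → ℝ × ℝ :=
  ![(-(Real.sqrt 3) / 2, -(1 : ℝ) / 2), (Real.sqrt 3 / 2, -(1 : ℝ) / 2), ((0 : ℝ), 1)]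

/-- The projection to the plane of an integer vector of `ℝ³`. -/
def projZ (t : Fin 3 → ℤ) : ℝ × ℝ :=
  (t 0 : ℝ) • pe 0 + (t 1 : ℝ) • pe 1 + (t 2 : ℝ) • pe 2

/-- A (representative of a) rhombus of the Rauzy tiling: a translation vector
`t ∈ ℤ³` together with a type in `{1, 2, 3}` (recorded as `Fin 3`), representing the
rhombus `proj(t) + R_k`. -/
abbrev RauzyRhomb := (Fin 3 → ℤ) × Fin 3

/-- The pair of unit vectors spanning a rhombus of each type: the rhombus `R_k` is
the projection of the face of the unit cube spanned by the basis vectors other than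
`e_k`. -/
def spanVecs : Fin 3 → (ℝ × ℝ) × (ℝ × ℝ) := ![(pe 1, pe 2), (pe 0, pe 2), (pe 0, pe 1)]

/-- The base point of a rhombus. -/
def rbase (r : RauzyRhomb) : ℝ × ℝ := projZ r.1

/-- The four corners of a rhombus, in cyclic order. -/
def cornerCyc (r : RauzyRhomb) : Fin 4 → ℝ × ℝ :=
  ![rbase r, rbase r + (spanVecs r.2).1,
    rbase r + (spanVecs r.2).1 + (spanVecs r.2).2, rbase r + (spanVecs r.2).2]

/-- The set of corners of a rhombus. -/
def corners (r : RauzyRhomb) : Set (ℝ × ℝ) := Set.range (cornerCyc r)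

/-- The two acute corners of a rhombus (the interior angle between the two spanning
vectors is `120°`, so the corners at `base + u` and `base + v` are the acute ones). -/
def acuteCorners (r : RauzyRhomb) : Set (ℝ × ℝ) :=
  {rbase r + (spanVecs r.2).1, rbase r + (spanVecs r.2).2}

/-- The two obtuse corners of a rhombus. -/
def obtuseCorners (r : RauzyRhomb) : Set (ℝ × ℝ) :=
  {rbase r, rbase r + (spanVecs r.2).1 + (spanVecs r.2).2}

/-- The four sides of a rhombus, as unordered pairs of points of the plane. -/
def sides (r : RauzyRhomb) : Set (Sym2 (ℝ × ℝ)) :=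
  {s(cornerCyc r 0, cornerCyc r 1), s(cornerCyc r 1, cornerCyc r 2),
   s(cornerCyc r 2, cornerCyc r 3), s(cornerCyc r 3, cornerCyc r 0)}

/-- The matrix `M` of the Rauzy substitution, acting on `ℤ³`. -/
def mApp (t : Fin 3 → ℤ) : Fin 3 → ℤ := ![t 1, t 2, t 0 - t 1 - t 2]

/-- The columns `c₁, c₂, c₃` of the matrix `M`. -/
def col : Fin 3 → (Fin 3 → ℤ) := ![![0, 0, 1], ![1, 0, -1], ![0, 1, -1]]

/-- The Rauzy substitution on rhombi:
`Sub(t + R₁) = {Mt + R₃, Mt + c₂ + R₁, Mt + c₃ + R₂}`, `Sub(t + R₂) = {Mt + R₁}`,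
`Sub(t + R₃) = {Mt + R₂}`. -/
def subR (r : RauzyRhomb) : Set RauzyRhomb :=
  (![{(mApp r.1, 2), (mApp r.1 + col 1, 0), (mApp r.1 + col 2, 1)},
     {(mApp r.1, 0)}, {(mApp r.1, 1)}] : Fin 3 → Set RauzyRhomb) r.2

/-- The patches `P_i` of the Rauzy tiling: `P₀ = {R₁, R₂, R₃}` and `P_{i+1}` is the
union of the images under the substitution of the rhombi of `P_i`. -/
def patch : ℕ → Set RauzyRhomb
  | 0 => {((0 : Fin 3 → ℤ), 0), ((0 : Fin 3 → ℤ), 1), ((0 : Fin 3 → ℤ), 2)}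
  | i + 1 => ⋃ r ∈ patch i, subR r

/-- The set of edges of the quiver `Q_i` given by the patch `P_i`. -/
def patchEdges (i : ℕ) : Set (Sym2 (ℝ × ℝ)) := ⋃ r ∈ patch i, sides r

/-- The set of edges of the full Rauzy tiling (the quiver `Q`). -/
def rauzyEdges : Set (Sym2 (ℝ × ℝ)) := ⋃ i, patchEdges i

/-- `p` is a vertex of the patch `P_i`. -/
def IsPatchVertex (i : ℕ) (p : ℝ × ℝ) : Prop := ∃ r ∈ patch i, p ∈ corners r

/-- `p` is a vertex of the Rauzy tiling. -/
def IsRauzyVertex (p : ℝ × ℝ) : Prop := ∃ i, IsPatchVertex i p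

/-- The number of edges of an edge-set `E` meeting the point `p`. -/
def degree (E : Set (Sym2 (ℝ × ℝ))) (p : ℝ × ℝ) : ℕ := Set.ncard {s ∈ E | p ∈ s}

/-!
At an acute corner `proj (t + e_j)` of a rhombus `t + R_k`, let `l` be the third index. The two
rhombi `t + R_l` and `t + e_j - e_k + R_j` share with `t + R_k` the two sides meeting there. In
`P_0` the first one is always present. After a substitution, a rhombus of type 3 comes from one of
type 1, whose image already contains the second; a rhombus of type 2 comes from type 1 or type 3,
and one of type 1 from type 1 or type 2. Hence a neighbour at each acute corner is inherited along
`3 → 2 → 1`, except that the image of the neighbour may instead provide a translate of the rhombus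
itself through the corner, `t + e_j + R_k` or `t + e_j - e_l + R_k`.
-/

local notation "𝐞" j:max => (Pi.single (j : Fin 3) (1 : ℤ) : Fin 3 → ℤ)

section Projection

lemma projZ_add (s t : Fin 3 → ℤ) : projZ (s + t) = projZ s + projZ t := by
  simp only [projZ, Pi.add_apply, Int.cast_add]
  module

lemma projZ_sub (s t : Fin 3 → ℤ) : projZ (s - t) = projZ s - projZ t := by
  simp only [projZ, Pi.sub_apply, Int.cast_sub]
  module

lemma projZ_single (j : Fin 3) : projZ (𝐞 j) = pe j := by
  fin_cases j <;> simp [projZ]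

lemma pe_ne_zero (j : Fin 3) : pe j ≠ 0 := by
  fin_cases j <;> simp [pe]

lemma pe_injective : Function.Injective pe := by
  have hsqrt : 0 < Real.sqrt 3 := by positivity
  intro j l h
  obtain ⟨hx, hy⟩ := Prod.ext_iff.1 h
  fin_cases j <;> fin_cases l <;> simp [pe] at hx hy ⊢ <;> linarith

end Projection

section Corners

lemma corners_eq_obtuseCorners_union_acuteCorners (r : RauzyRhomb) :
    corners r = obtuseCorners r ∪ acuteCorners r := by
  ext p
  constructor
  · rintro ⟨n, rfl⟩
    fin_cases n
    exacts [.inl (.inl rfl), .inr (.inl rfl), .inl (.inr rfl), .inr (.inr rfl)]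
  · rintro ((rfl | rfl) | (rfl | rfl))
    exacts [⟨0, rfl⟩, ⟨2, rfl⟩, ⟨1, rfl⟩, ⟨3, rfl⟩]

lemma mem_acuteCorners_iff {t : Fin 3 → ℤ} {k : Fin 3} {p : ℝ × ℝ} :
    p ∈ acuteCorners (t, k) ↔ ∃ j ≠ k, p = projZ (t + 𝐞 j) := by
  simp only [projZ_add, projZ_single]
  fin_cases k <;> simp [acuteCorners, rbase, spanVecs, Fin.exists_fin_succ]

lemma projZ_mem_corners (t : Fin 3 → ℤ) (k : Fin 3) : projZ t ∈ corners (t, k) :=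
  ⟨0, rfl⟩

lemma projZ_add_single_mem_corners (t : Fin 3 → ℤ) {j k : Fin 3} (hjk : j ≠ k) :
    projZ (t + 𝐞 j) ∈ corners (t, k) := by
  rw [corners_eq_obtuseCorners_union_acuteCorners]
  exact .inr (mem_acuteCorners_iff.2 ⟨j, hjk, rfl⟩)

end Corners

section Substitution

/-- The image of a set of rhombi under the Rauzy substitution, so that
`P_{i+1} = substitute P_i`. -/
def substitute (P : Set RauzyRhomb) : Set RauzyRhomb := ⋃ r ∈ P, subR r

lemma mApp_add (s t : Fin 3 → ℤ) : mApp (s + t) = mApp s + mApp t := by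
  ext n
  fin_cases n
  exacts [rfl, rfl, by simp only [mApp, Pi.add_apply, Fin.reduceFinMk, Matrix.cons_val]; ring]

lemma mApp_sub (s t : Fin 3 → ℤ) : mApp (s - t) = mApp s - mApp t := by
  ext n
  fin_cases n
  exacts [rfl, rfl, by simp only [mApp, Pi.sub_apply, Fin.reduceFinMk, Matrix.cons_val]; ring]

lemma mApp_single (j : Fin 3) : mApp (𝐞 j) = col j := by decide +revert

lemma col_zero : col 0 = 𝐞 2 := by decide

lemma col_one : col 1 = 𝐞 0 - 𝐞 2 := by decide

lemma col_two : col 2 = 𝐞 1 - 𝐞 2 := by decide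

variable {P : Set RauzyRhomb} {u : Fin 3 → ℤ}

lemma mem_substitute_zero_iff :
    (u, 0) ∈ substitute P ↔
      ∃ t, (t, 0) ∈ P ∧ u = mApp t + 𝐞 0 - 𝐞 2 ∨ (t, 1) ∈ P ∧ u = mApp t := by
  simp [substitute, subR, Fin.exists_fin_succ, col_one, add_sub_assoc]

lemma mem_substitute_one_iff :
    (u, 1) ∈ substitute P ↔
      ∃ t, (t, 0) ∈ P ∧ u = mApp t + 𝐞 1 - 𝐞 2 ∨ (t, 2) ∈ P ∧ u = mApp t := by
  simp [substitute, subR, Fin.exists_fin_succ, col_two, add_sub_assoc]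

lemma mem_substitute_two_iff :
    (u, 2) ∈ substitute P ↔ ∃ t, (t, 0) ∈ P ∧ u = mApp t := by
  simp [substitute, subR, Fin.exists_fin_succ]

end Substitution

/-- Every acute corner `proj (t + e_j)` of every rhombus `(t, k)` of `P` is covered by a second
rhombus of `P`, in a form that is preserved by the substitution. The field `cover_k_j`, with indices
counted from `0` and `l` the third index, lists the candidates: the neighbours `(t, l)` and
`(t + e_j - e_k, j)` along the two sides at the corner, then possibly a translate of `(t, k)` by
`e_j` or `e_j - e_l`. -/
structure AcuteCornersCovered (P : Set RauzyRhomb) : Prop where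
  cover_two_zero {t} : (t, 2) ∈ P → (t, 1) ∈ P ∨ (t + 𝐞 0 - 𝐞 2, 0) ∈ P
  cover_two_one {t} : (t, 2) ∈ P → (t, 0) ∈ P ∨ (t + 𝐞 1 - 𝐞 2, 1) ∈ P
  cover_one_zero {t} : (t, 1) ∈ P → (t, 2) ∈ P ∨ (t + 𝐞 0 - 𝐞 1, 0) ∈ P
  cover_one_two {t} : (t, 1) ∈ P → (t, 0) ∈ P ∨ (t + 𝐞 2 - 𝐞 1, 2) ∈ P ∨ (t + 𝐞 2, 1) ∈ P
  cover_zero_one {t} :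
    (t, 0) ∈ P → (t, 2) ∈ P ∨ (t + 𝐞 1 - 𝐞 0, 1) ∈ P ∨ (t + 𝐞 1 - 𝐞 2, 0) ∈ P
  cover_zero_two {t} : (t, 0) ∈ P → (t, 1) ∈ P ∨ (t + 𝐞 2 - 𝐞 0, 2) ∈ P ∨ (t + 𝐞 2, 0) ∈ P

section Preservation

variable {P : Set RauzyRhomb} {u : Fin 3 → ℤ}

lemma substitute_cover_two_zero (hu : (u, 2) ∈ substitute P) :
    (u + 𝐞 0 - 𝐞 2, 0) ∈ substitute P := by
  obtain ⟨t, ht, rfl⟩ := mem_substitute_two_iff.1 hu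
  exact mem_substitute_zero_iff.2 ⟨t, .inl ⟨ht, rfl⟩⟩

lemma substitute_cover_two_one (hu : (u, 2) ∈ substitute P) :
    (u + 𝐞 1 - 𝐞 2, 1) ∈ substitute P := by
  obtain ⟨t, ht, rfl⟩ := mem_substitute_two_iff.1 hu
  exact mem_substitute_one_iff.2 ⟨t, .inl ⟨ht, rfl⟩⟩

namespace AcuteCornersCovered

lemma substitute_cover_one_zero (hP : AcuteCornersCovered P) (hu : (u, 1) ∈ substitute P) :
    (u, 2) ∈ substitute P ∨ (u + 𝐞 0 - 𝐞 1, 0) ∈ substitute P := by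
  obtain ⟨t, ⟨ht, rfl⟩ | ⟨ht, rfl⟩⟩ := mem_substitute_one_iff.1 hu
  · exact .inr (mem_substitute_zero_iff.2 ⟨t, .inl ⟨ht, by abel⟩⟩)
  · rcases hP.cover_two_one ht with hs | hs
    · exact .inl (mem_substitute_two_iff.2 ⟨t, hs, rfl⟩)
    · refine .inr (mem_substitute_zero_iff.2 ⟨_, .inr ⟨hs, ?_⟩⟩)
      rw [mApp_sub, mApp_add, mApp_single, mApp_single, col_one, col_two]
      abel

lemma substitute_cover_one_two (hP : AcuteCornersCovered P) (hu : (u, 1) ∈ substitute P) :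
    (u, 0) ∈ substitute P ∨ (u + 𝐞 2 - 𝐞 1, 2) ∈ substitute P ∨
      (u + 𝐞 2, 1) ∈ substitute P := by
  obtain ⟨t, ⟨ht, rfl⟩ | ⟨ht, rfl⟩⟩ := mem_substitute_one_iff.1 hu
  · exact .inr (.inl (mem_substitute_two_iff.2 ⟨t, ht, by abel⟩))
  · rcases hP.cover_two_zero ht with hs | hs
    · exact .inl (mem_substitute_zero_iff.2 ⟨t, .inr ⟨hs, rfl⟩⟩)
    · refine .inr (.inr (mem_substitute_one_iff.2 ⟨_, .inl ⟨hs, ?_⟩⟩))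
      rw [mApp_sub, mApp_add, mApp_single, mApp_single, col_zero, col_two]
      abel

lemma substitute_cover_zero_one (hP : AcuteCornersCovered P) (hu : (u, 0) ∈ substitute P) :
    (u, 2) ∈ substitute P ∨ (u + 𝐞 1 - 𝐞 0, 1) ∈ substitute P ∨
      (u + 𝐞 1 - 𝐞 2, 0) ∈ substitute P := by
  obtain ⟨t, ⟨ht, rfl⟩ | ⟨ht, rfl⟩⟩ := mem_substitute_zero_iff.1 hu
  · exact .inr (.inl (mem_substitute_one_iff.2 ⟨t, .inl ⟨ht, by abel⟩⟩))
  · rcases hP.cover_one_two ht with hs | hs | hs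
    · exact .inl (mem_substitute_two_iff.2 ⟨t, hs, rfl⟩)
    · refine .inr (.inl (mem_substitute_one_iff.2 ⟨_, .inr ⟨hs, ?_⟩⟩))
      rw [mApp_sub, mApp_add, mApp_single, mApp_single, col_one, col_two]
      abel
    · refine .inr (.inr (mem_substitute_zero_iff.2 ⟨_, .inr ⟨hs, ?_⟩⟩))
      rw [mApp_add, mApp_single, col_two]
      abel

lemma substitute_cover_zero_two (hP : AcuteCornersCovered P) (hu : (u, 0) ∈ substitute P) :
    (u, 1) ∈ substitute P ∨ (u + 𝐞 2 - 𝐞 0, 2) ∈ substitute P ∨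
      (u + 𝐞 2, 0) ∈ substitute P := by
  obtain ⟨t, ⟨ht, rfl⟩ | ⟨ht, rfl⟩⟩ := mem_substitute_zero_iff.1 hu
  · exact .inr (.inl (mem_substitute_two_iff.2 ⟨t, ht, by abel⟩))
  · rcases hP.cover_one_zero ht with hs | hs
    · exact .inl (mem_substitute_one_iff.2 ⟨t, .inr ⟨hs, rfl⟩⟩)
    · refine .inr (.inr (mem_substitute_zero_iff.2 ⟨_, .inl ⟨hs, ?_⟩⟩))
      rw [mApp_sub, mApp_add, mApp_single, mApp_single, col_zero, col_one]
      abel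

protected theorem substitute (hP : AcuteCornersCovered P) :
    AcuteCornersCovered (substitute P) where
  cover_two_zero hu := .inr (substitute_cover_two_zero hu)
  cover_two_one hu := .inr (substitute_cover_two_one hu)
  cover_one_zero := hP.substitute_cover_one_zero
  cover_one_two := hP.substitute_cover_one_two
  cover_zero_one := hP.substitute_cover_zero_one
  cover_zero_two := hP.substitute_cover_zero_two

end AcuteCornersCovered

lemma mem_patch_zero_iff {t : Fin 3 → ℤ} {k : Fin 3} : (t, k) ∈ patch 0 ↔ t = 0 := by
  fin_cases k <;> simp [patch]

lemma acuteCornersCovered_patch_zero : AcuteCornersCovered (patch 0) := by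
  constructor <;> simp +contextual [mem_patch_zero_iff]

theorem acuteCornersCovered_patch (i : ℕ) : AcuteCornersCovered (patch i) := by
  induction i with
  | zero => exact acuteCornersCovered_patch_zero
  | succ i ih => exact ih.substitute

end Preservation

namespace AcuteCornersCovered

variable {P : Set RauzyRhomb} {t : Fin 3 → ℤ} {j k : Fin 3}

lemma exists_covering_rhomb (hP : AcuteCornersCovered P) (hr : (t, k) ∈ P) (hjk : j ≠ k) :
    ∃ l, l ≠ j ∧ l ≠ k ∧ ((t, l) ∈ P ∨ (t + 𝐞 j - 𝐞 k, j) ∈ P ∨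
      (t + 𝐞 j - 𝐞 l, k) ∈ P ∨ (t + 𝐞 j, k) ∈ P) := by
  fin_cases k <;> fin_cases j <;> try exact absurd rfl hjk
  · exact ⟨2, by decide, by decide, by have := hP.cover_zero_one hr; tauto⟩
  · exact ⟨1, by decide, by decide, by have := hP.cover_zero_two hr; tauto⟩
  · exact ⟨2, by decide, by decide, by have := hP.cover_one_zero hr; tauto⟩
  · exact ⟨0, by decide, by decide, by have := hP.cover_one_two hr; tauto⟩
  · exact ⟨1, by decide, by decide, by have := hP.cover_two_zero hr; tauto⟩
  · exact ⟨0, by decide, by decide, by have := hP.cover_two_one hr; tauto⟩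

theorem exists_other_rhomb (hP : AcuteCornersCovered P) (hr : (t, k) ∈ P) (hjk : j ≠ k) :
    ∃ r ∈ P, projZ (t + 𝐞 j) ∈ corners r ∧ ¬(rbase r = projZ t ∧ r.2 = k) := by
  obtain ⟨l, hlj, hlk, hl | hj | hk | hk⟩ := hP.exists_covering_rhomb hr hjk
  · exact ⟨_, hl, projZ_add_single_mem_corners t hlj.symm, fun h ↦ hlk h.2⟩
  · refine ⟨_, hj, ?_, fun h ↦ hjk h.2⟩
    simpa using projZ_add_single_mem_corners (t + 𝐞 j - 𝐞 k) hjk.symm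
  · refine ⟨_, hk, ?_, fun h ↦ hlj ?_⟩
    · simpa using projZ_add_single_mem_corners (t + 𝐞 j - 𝐞 l) hlk
    · have hbase := h.1
      rw [rbase, projZ_sub, projZ_add, projZ_single, projZ_single, add_sub_assoc,
        add_eq_left, sub_eq_zero] at hbase
      exact (pe_injective hbase).symm
  · refine ⟨_, hk, projZ_mem_corners _ k, fun h ↦ pe_ne_zero j ?_⟩
    simpa [rbase, projZ_add, projZ_single] using h.1

end AcuteCornersCovered

/-- **Statement 11** (No acute isolated vertices, Lemma `acute`).
For every `i ≥ 0`, the patch `P_i` of the Rauzy tiling contains no acute isolated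
vertex: every vertex of `P_i` that lies on exactly one rhombus of `P_i` (up to
geometric identification of representatives) sits at an obtuse corner of that
rhombus. -/
theorem statement11 (i : ℕ) (p : ℝ × ℝ) (r : RauzyRhomb) (hr : r ∈ patch i)
    (hp : p ∈ corners r)
    (hiso : ∀ r' ∈ patch i, p ∈ corners r' → rbase r' = rbase r ∧ r'.2 = r.2) :
    p ∈ obtuseCorners r := by
  rw [corners_eq_obtuseCorners_union_acuteCorners] at hp
  refine hp.resolve_right fun hacute ↦ ?_
  obtain ⟨t, k⟩ := r
  obtain ⟨j, hjk, rfl⟩ := mem_acuteCorners_iff.1 hacute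
  obtain ⟨r', hr', hmem, hne⟩ := (acuteCornersCovered_patch i).exists_other_rhomb hr hjk
  exact hne (hiso r' hr' hmem)
end
end

section
/- For every i >= 0 and every vertex z of Q_i, if z is an n-vertex in the full Rauzy-tiling quiver Q and a k-vertex in Q_i (that is, z is a (k,n)-vertex), then n - k <= 3; equivalently, no (2,6)-vertex occurs in any Q_i. -/
/-!
The Rauzy tiling, built recursively from the Rauzy substitution, together with the
combinatorics of its patches `P_i` (corners, edges, sides, acute/obtuse corners).
-/

noncomputable section

/-!
The substitution matrix `M` has a positive left eigenvector `v = (1, β + β², β)` whose eigenvalue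
`β` is the positive root of `x³ + x² + x = 1`.  Pairing with `v` gives a height on `ℤ³`, and every
rhombus `(t, k)` of every patch satisfies `0 ≤ height t < v k`: the patches are pieces of a stepped
surface.  On the strip `0 ≤ height x < v 0 + v 1 + v 2`, which contains all vertices and edges, the
projection to the plane is injective.

A vertex `x` at which all six edges are present therefore satisfies `1 ≤ height x` and
`height x + 1 < v 0 + v 1 + v 2`, so it can only be an acute corner `x = t + e_j` of a rhombus
`(t, k)`.  The stepped surface then also contains the rhombus `(x - e_k, j)` on the other side of
the edge from `x` to `x + e_l`, and an induction on the patch shows that this rhombus is already in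
the same patch, unless `t = 0`, where all three rhombi at the origin are.  Either way `x` has a
third edge in the patch.
-/

namespace Rauzy

/-! ### The height functional -/

lemma exists_pos_root_cubic : ∃ x : ℝ, 0 < x ∧ x ^ 3 + x ^ 2 + x = 1 := by
  have hivt := intermediate_value_Ioo (f := fun x : ℝ => x ^ 3 + x ^ 2 + x) zero_le_one
    (by fun_prop)
  obtain ⟨x, hx, hroot⟩ := hivt (show (1 : ℝ) ∈ _ by constructor <;> norm_num)
  exact ⟨x, hx.1, hroot⟩

/-- The reciprocal `β` of the tribonacci constant: the eigenvalue of `M` belonging to the left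
eigenvector `weight`. -/
def tribonacciInv : ℝ := exists_pos_root_cubic.choose

local notation "β" => tribonacciInv

lemma tribonacciInv_pos : 0 < β := exists_pos_root_cubic.choose_spec.1

lemma tribonacciInv_cubic : β ^ 3 + β ^ 2 + β = 1 := exists_pos_root_cubic.choose_spec.2

/-- The left eigenvector `v` of the substitution matrix `M`, normalized by `v 0 = 1`. -/
def weight : Fin 3 → ℝ := ![1, β + β ^ 2, β]

lemma weight_pos (k : Fin 3) : 0 < weight k := by
  have := tribonacciInv_pos
  fin_cases k
  · exact one_pos
  · change 0 < β + β ^ 2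
    positivity
  · exact tribonacciInv_pos

lemma weight_le_one (k : Fin 3) : weight k ≤ 1 := by
  have hcubic := tribonacciInv_cubic
  have hsq : 0 < β ^ 2 := pow_pos tribonacciInv_pos 2
  have hcube : 0 < β ^ 3 := pow_pos tribonacciInv_pos 3
  fin_cases k
  · exact le_rfl
  · change β + β ^ 2 ≤ 1
    linarith
  · change β ≤ 1
    linarith

lemma weight_two_le (k : Fin 3) : weight 2 ≤ weight k := by
  fin_cases k
  · exact weight_le_one 2
  · exact le_add_of_nonneg_right (sq_nonneg β)
  · exact le_rfl

lemma tribonacciInv_mul_weight_zero : β * weight 0 = weight 2 := mul_one β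

lemma tribonacciInv_mul_weight_succ (m : Fin 2) :
    β * weight m.succ = weight m.castSucc - weight 2 := by
  fin_cases m
  · change β * (β + β ^ 2) = 1 - β
    linear_combination tribonacciInv_cubic
  · change β * β = β + β ^ 2 - β
    ring

/-- The linear functional on `ℤ³` given by pairing with `weight`. -/
def height : (Fin 3 → ℤ) →ₗ[ℤ] ℝ := Fintype.linearCombination ℤ weight

@[simp]
lemma height_single (k : Fin 3) : height (Pi.single k 1) = weight k := by
  simp [height, Fintype.linearCombination_apply_single]

lemma height_mApp (t : Fin 3 → ℤ) : height (mApp t) = β * height t := by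
  simp only [height, Fintype.linearCombination_apply, Fin.sum_univ_three, zsmul_eq_mul, weight,
    mApp, Matrix.cons_val, Int.cast_sub]
  linear_combination (-t 1 : ℝ) * tribonacciInv_cubic

/-! ### Patches -/

lemma mApp_eq_linearCombination (t : Fin 3 → ℤ) :
    mApp t = Fintype.linearCombination ℤ col t := by
  ext a
  fin_cases a <;>
    simp [mApp, col, Fintype.linearCombination_apply, Fin.sum_univ_three, sub_eq_add_neg, add_assoc]

lemma mApp_zero : mApp 0 = 0 := by
  rw [mApp_eq_linearCombination, map_zero]

lemma col_succ (m : Fin 2) : col m.succ = Pi.single m.castSucc 1 - Pi.single 2 1 := by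
  revert m; decide

lemma mApp_add_single_sub_single (t : Fin 3 → ℤ) (j k : Fin 2) :
    mApp (t + Pi.single j.succ 1 - Pi.single k.succ 1) =
      mApp t + Pi.single j.castSucc 1 - Pi.single k.castSucc 1 := by
  simp only [mApp_eq_linearCombination, map_sub, map_add,
    Fintype.linearCombination_apply_single, one_smul, col_succ]
  abel

lemma mem_subR_zero {s t : Fin 3 → ℤ} {k : Fin 3} :
    (s, k) ∈ subR (t, 0) ↔ s = mApp t + Pi.single k 1 - Pi.single 2 1 := by
  have hcol_one : col 1 = Pi.single 0 1 - Pi.single 2 1 := col_succ 0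
  have hcol_two : col 2 = Pi.single 1 1 - Pi.single 2 1 := col_succ 1
  fin_cases k <;> simp [subR, add_sub_assoc, hcol_one, hcol_two]

lemma mem_subR_succ {s t : Fin 3 → ℤ} {k : Fin 3} {m : Fin 2} :
    (s, k) ∈ subR (t, m.succ) ↔ s = mApp t ∧ k = m.castSucc := by
  fin_cases m <;> simp [subR]

lemma mem_patch_zero {t : Fin 3 → ℤ} {k : Fin 3} : (t, k) ∈ patch 0 ↔ t = 0 := by
  fin_cases k <;> simp [patch]

lemma mem_patch_succ {i : ℕ} {s : Fin 3 → ℤ} {k : Fin 3} :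
    (s, k) ∈ patch (i + 1) ↔
      (∃ t, (t, 0) ∈ patch i ∧ s = mApp t + Pi.single k 1 - Pi.single 2 1) ∨
      ∃ t, ∃ m : Fin 2, (t, m.succ) ∈ patch i ∧ s = mApp t ∧ k = m.castSucc := by
  simp only [patch, Set.mem_iUnion, exists_prop, Prod.exists, Fin.exists_fin_succ (n := 2),
    mem_subR_zero, mem_subR_succ, exists_or]

lemma zero_mem_patch (i : ℕ) (k : Fin 3) : (0, k) ∈ patch i := by
  induction i generalizing k with
  | zero => exact mem_patch_zero.2 rfl
  | succ i ih =>
    refine mem_patch_succ.2 ?_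
    induction k using Fin.lastCases with
    | last => exact .inl ⟨0, ih 0, by simp [mApp_zero]⟩
    | cast m => exact .inr ⟨0, m, ih m.succ, mApp_zero.symm, rfl⟩

lemma height_mem_Ico_of_mem_patch {i : ℕ} {t : Fin 3 → ℤ} {k : Fin 3} (h : (t, k) ∈ patch i) :
    height t ∈ Set.Ico 0 (weight k) := by
  have hβ := tribonacciInv_pos
  induction i generalizing t k with
  | zero => simp [mem_patch_zero.1 h, weight_pos]
  | succ i ih =>
    obtain ⟨u, hu, rfl⟩ | ⟨u, m, hu, rfl, rfl⟩ := mem_patch_succ.1 h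
    · obtain ⟨hnonneg, hlt⟩ := ih hu
      have hscaled := mul_nonneg hβ.le hnonneg
      have hscaled_lt := mul_lt_mul_of_pos_left hlt hβ
      rw [tribonacciInv_mul_weight_zero] at hscaled_lt
      have hk := weight_two_le k
      simp only [map_sub, map_add, height_mApp, height_single]
      constructor <;> linarith
    · obtain ⟨hnonneg, hlt⟩ := ih hu
      have hscaled_lt := mul_lt_mul_of_pos_left hlt hβ
      rw [tribonacciInv_mul_weight_succ] at hscaled_lt
      rw [height_mApp]
      exact ⟨mul_nonneg hβ.le hnonneg, hscaled_lt.trans (sub_lt_self _ (weight_pos 2))⟩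

-- The rhombus `(t + e_j - e_k, j)` is the one next to `(t, k)` at its acute corner `t + e_j`, and
-- `hle` says that its height is nonnegative.  The three children of a type-`0` rhombus are such
-- neighbours of each other; any other rhombus is an only child, and its neighbour is the child of
-- a neighbour of its parent.
lemma eq_zero_or_acuteNeighbor_mem_patch {i : ℕ} {t : Fin 3 → ℤ} {j k : Fin 3}
    (h : (t, k) ∈ patch i) (hjk : j ≠ k) (hle : weight k ≤ height (t + Pi.single j 1)) :
    t = 0 ∨ (t + Pi.single j 1 - Pi.single k 1, j) ∈ patch i := by
  induction i generalizing t j k with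
  | zero => exact .inl (mem_patch_zero.1 h)
  | succ i ih =>
    obtain ⟨u, hu, rfl⟩ | ⟨u, m, hu, rfl, rfl⟩ := mem_patch_succ.1 h
    · exact .inr (mem_patch_succ.2 (.inl ⟨u, hu, by abel⟩))
    simp only [map_add, height_mApp, height_single] at hle ih
    induction j using Fin.lastCases with
    | last =>
      have hlt := mul_lt_mul_of_pos_left (height_mem_Ico_of_mem_patch hu).2 tribonacciInv_pos
      rw [tribonacciInv_mul_weight_succ] at hlt
      exact absurd hle (not_le.2 (lt_sub_iff_add_lt.1 hlt))
    | cast j =>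
      have hle_parent : weight m.succ ≤ height u + weight j.succ := by
        refine le_of_mul_le_mul_left ?_ tribonacciInv_pos
        rw [mul_add, tribonacciInv_mul_weight_succ, tribonacciInv_mul_weight_succ]
        linarith
      have hne : j.succ ≠ m.succ := fun heq => hjk (by rw [Fin.succ_injective _ heq])
      obtain rfl | hneighbor := ih hu hne hle_parent
      · exact .inl mApp_zero
      · exact .inr (mem_patch_succ.2
          (.inr ⟨_, j, hneighbor, (mApp_add_single_sub_single u j m).symm, rfl⟩))

/-! ### The projection to the plane -/

lemma projZ_eq_linearCombination (t : Fin 3 → ℤ) :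
    projZ t = Fintype.linearCombination ℤ pe t := by
  simp only [projZ, Int.cast_smul_eq_zsmul, Fintype.linearCombination_apply, Fin.sum_univ_three]

lemma projZ_sub (s t : Fin 3 → ℤ) : projZ (s - t) = projZ s - projZ t := by
  simp only [projZ_eq_linearCombination, map_sub]

lemma projZ_add_single (t : Fin 3 → ℤ) (a : Fin 3) :
    projZ (t + Pi.single a 1) = projZ t + pe a := by
  simp only [projZ_eq_linearCombination, map_add, Fintype.linearCombination_apply_single, one_smul]

lemma eq_apply_zero_of_projZ_eq_zero {t : Fin 3 → ℤ} (h : projZ t = 0) (a : Fin 3) :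
    t a = t 0 := by
  have hfst : √3 * ((t 1 : ℝ) - t 0) = 0 := by
    have := congrArg Prod.fst h
    simp only [projZ, pe, Matrix.cons_val, Prod.smul_mk, Prod.mk_add_mk, Prod.fst_zero,
      smul_eq_mul] at this
    linear_combination 2 * this
  have hsnd : 2 * (t 2 : ℝ) - t 0 - t 1 = 0 := by
    have := congrArg Prod.snd h
    simp only [projZ, pe, Matrix.cons_val, Prod.smul_mk, Prod.mk_add_mk, Prod.snd_zero,
      smul_eq_mul] at this
    linear_combination 2 * this
  have hone : (t 1 : ℝ) - t 0 = 0 := (mul_eq_zero.1 hfst).resolve_left (by positivity)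
  norm_cast at hone hsnd
  fin_cases a <;> simp only [Fin.zero_eta, Fin.mk_one, Fin.reduceFinMk] <;> omega

/-- The integer points between two parallel planes of heights `0` and `height (1, 1, 1)`, where
`(1, 1, 1)` generates the kernel of `projZ`. -/
def strip : Set (Fin 3 → ℤ) := {x | height x ∈ Set.Ico 0 (∑ k, weight k)}

lemma mem_strip {x : Fin 3 → ℤ} : x ∈ strip ↔ 0 ≤ height x ∧ height x < ∑ k, weight k := Iff.rfl

lemma projZ_injOn_strip : Set.InjOn projZ strip := by
  rintro x ⟨hx, hx'⟩ y ⟨hy, hy'⟩ hxy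
  have hconst : x - y = fun _ => (x - y) 0 :=
    funext (eq_apply_zero_of_projZ_eq_zero (by rw [projZ_sub, hxy, sub_self]))
  have hheight : height x - height y = (x - y) 0 * ∑ k, weight k := by
    rw [← map_sub, hconst]
    simp only [height, Fintype.linearCombination_apply, zsmul_eq_mul, Finset.mul_sum]
  have hsum : 0 < ∑ k, weight k := hx.trans_lt hx'
  have habs : |((x - y) 0 : ℝ)| < 1 := by
    rw [← mul_lt_iff_lt_one_left hsum, ← abs_of_pos hsum, ← abs_mul, abs_of_pos hsum, ← hheight]
    exact abs_sub_lt_of_nonneg_of_lt hx hx' hy hy'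
  have hzero : (x - y) 0 = 0 := Int.abs_lt_one_iff.1 (by exact_mod_cast habs)
  rw [← sub_eq_zero, hconst, hzero]
  rfl

lemma pe_injective : Function.Injective pe := by
  intro a b h
  have hsqrt : 0 < √3 := by positivity
  have hfst := congrArg Prod.fst h
  have hsnd := congrArg Prod.snd h
  fin_cases a <;> fin_cases b <;> simp [pe] at hfst hsnd ⊢ <;> linarith

lemma pe_add_ne_zero (a b : Fin 3) : pe a + pe b ≠ 0 := by
  intro h
  have hsnd := congrArg Prod.snd h
  fin_cases a <;> fin_cases b <;> norm_num [pe] at hsnd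

/-! ### Degrees -/

section Directions

variable {E : Set (Sym2 (ℝ × ℝ))} {p q : ℝ × ℝ} {a b : Fin 3}

/-- The directions `a` for which the edge from `p` to `p + pe a` belongs to `E`. -/
def outDirs (E : Set (Sym2 (ℝ × ℝ))) (p : ℝ × ℝ) : Set (Fin 3) := {a | s(p, p + pe a) ∈ E}

/-- The directions `a` for which the edge from `p - pe a` to `p` belongs to `E`. -/
def inDirs (E : Set (Sym2 (ℝ × ℝ))) (p : ℝ × ℝ) : Set (Fin 3) := {a | s(p - pe a, p) ∈ E}

lemma mem_inDirs_add : a ∈ inDirs E (p + pe a) ↔ a ∈ outDirs E p := by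
  simp [inDirs, outDirs]

lemma edge_eq_edge_iff : s(p, p + pe a) = s(q, q + pe b) ↔ p = q ∧ a = b := by
  refine ⟨fun h => ?_, by rintro ⟨rfl, rfl⟩; rfl⟩
  obtain ⟨rfl, h⟩ | ⟨h, h'⟩ := Sym2.eq_iff.1 h
  · exact ⟨rfl, pe_injective (add_left_cancel h)⟩
  · exact absurd (by linear_combination h' - h) (pe_add_ne_zero a b)

lemma degree_eq_ncard_inDirs_add_ncard_outDirs
    (hE : ∀ e ∈ E, ∃ q a, e = s(q, q + pe a)) (p : ℝ × ℝ) :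
    degree E p = (inDirs E p).ncard + (outDirs E p).ncard := by
  set inEdge : Fin 3 → Sym2 (ℝ × ℝ) := fun a => s(p - pe a, p - pe a + pe a) with hin
  set outEdge : Fin 3 → Sym2 (ℝ × ℝ) := fun a => s(p, p + pe a) with hout
  have hstar : {e ∈ E | p ∈ e} = inEdge '' inDirs E p ∪ outEdge '' outDirs E p := by
    ext e
    constructor
    · rintro ⟨he, hp⟩
      obtain ⟨q, a, rfl⟩ := hE e he
      obtain rfl | rfl := Sym2.mem_iff.1 hp
      · exact .inr ⟨a, he, rfl⟩
      · exact .inl ⟨a, mem_inDirs_add.2 he, by simp [hin]⟩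
    · rintro (⟨a, ha, rfl⟩ | ⟨a, ha, rfl⟩)
      · simpa [hin, inDirs] using ha
      · simpa [hout, outDirs] using ha
  have hdisj : Disjoint (inEdge '' inDirs E p) (outEdge '' outDirs E p) := by
    rw [Set.disjoint_left]
    rintro _ ⟨a, -, rfl⟩ ⟨b, -, heq⟩
    obtain ⟨hp, rfl⟩ := edge_eq_edge_iff.1 heq
    exact pe_add_ne_zero b b (by linear_combination hp + hp)
  have hin_inj : Function.Injective inEdge := fun _ _ h => (edge_eq_edge_iff.1 h).2
  have hout_inj : Function.Injective outEdge := fun _ _ h => (edge_eq_edge_iff.1 h).2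
  rw [degree, hstar, Set.ncard_union_eq hdisj (Set.toFinite _) (Set.toFinite _),
    Set.ncard_image_of_injective _ hin_inj, Set.ncard_image_of_injective _ hout_inj]

end Directions

/-! ### Corners and sides of rhombi -/

section Rhombus

variable {t : Fin 3 → ℤ} {a b k : Fin 3} {p : ℝ × ℝ} {e : Sym2 (ℝ × ℝ)}

lemma exists_spanVecs_eq (k : Fin 3) :
    ∃ a b, a ≠ b ∧ a ≠ k ∧ b ≠ k ∧ spanVecs k = (pe a, pe b) := by
  fin_cases k
  · exact ⟨1, 2, by decide, by decide, by decide, rfl⟩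
  · exact ⟨0, 2, by decide, by decide, by decide, rfl⟩
  · exact ⟨0, 1, by decide, by decide, by decide, rfl⟩

lemma spanVecs_eq_or_swap (hab : a ≠ b) (hak : a ≠ k) (hbk : b ≠ k) :
    spanVecs k = (pe a, pe b) ∨ spanVecs k = (pe b, pe a) := by
  obtain ⟨c, d, hcd, hck, hdk, hspan⟩ := exists_spanVecs_eq k
  obtain ⟨rfl, rfl⟩ | ⟨rfl, rfl⟩ : a = c ∧ b = d ∨ a = d ∧ b = c := by omega
  · exact .inl hspan
  · exact .inr hspan

lemma mem_sides : e ∈ sides (t, k) ↔ ∃ a b, a ≠ b ∧ a ≠ k ∧ b ≠ k ∧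
    (e = s(projZ t, projZ t + pe a) ∨
      e = s(projZ (t + Pi.single b 1), projZ (t + Pi.single b 1) + pe a)) := by
  simp only [sides, cornerCyc, rbase, Matrix.cons_val, Set.mem_insert_iff, Set.mem_singleton_iff,
    projZ_add_single]
  constructor
  · obtain ⟨a, b, hab, hak, hbk, hspan⟩ := exists_spanVecs_eq k
    simp only [hspan]
    rintro (rfl | rfl | rfl | rfl)
    · exact ⟨a, b, hab, hak, hbk, .inl rfl⟩
    · exact ⟨b, a, hab.symm, hbk, hak, .inr rfl⟩
    · exact ⟨a, b, hab, hak, hbk, .inr (by rw [Sym2.eq_swap, add_right_comm])⟩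
    · exact ⟨b, a, hab.symm, hbk, hak, .inl Sym2.eq_swap⟩
  · rintro ⟨a, b, hab, hak, hbk, he⟩
    obtain hspan | hspan := spanVecs_eq_or_swap hab hak hbk <;>
      obtain rfl | rfl := he <;>
      simp only [hspan, Sym2.eq_swap, add_right_comm, true_or, or_true]

lemma eq_of_mem_corners (hp : p ∈ corners (t, k)) :
    p = projZ t ∨ (∃ j, j ≠ k ∧ p = projZ (t + Pi.single j 1)) ∨
      ∃ a b, a ≠ b ∧ a ≠ k ∧ b ≠ k ∧ p = projZ (t + Pi.single a 1 + Pi.single b 1) := by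
  obtain ⟨a, b, hab, hak, hbk, hspan⟩ := exists_spanVecs_eq k
  obtain ⟨m, rfl⟩ := hp
  simp only [cornerCyc, rbase, hspan, projZ_add_single]
  fin_cases m
  · exact .inl rfl
  · exact .inr (.inl ⟨a, hak, rfl⟩)
  · exact .inr (.inr ⟨a, b, hab, hak, hbk, rfl⟩)
  · exact .inr (.inl ⟨b, hbk, rfl⟩)

lemma sum_univ_eq_add_add {M : Type*} [AddCommMonoid M] (f : Fin 3 → M) (hab : a ≠ b)
    (hak : a ≠ k) (hbk : b ≠ k) : ∑ i, f i = f k + f a + f b := by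
  have huniv : (Finset.univ : Finset (Fin 3)) = {k, a, b} := by
    ext c
    simp only [Finset.mem_univ, Finset.mem_insert, Finset.mem_singleton, true_iff]
    omega
  rw [huniv, Finset.sum_insert (by simp [hak.symm, hbk.symm]), Finset.sum_pair hab, add_assoc]

end Rhombus

/-! ### Edges of the tiling -/

section Edges

variable {i : ℕ} {t x : Fin 3 → ℤ} {a b k : Fin 3} {e : Sym2 (ℝ × ℝ)}

lemma exists_height_of_mem_rauzyEdges (he : e ∈ rauzyEdges) :
    ∃ x a, e = s(projZ x, projZ x + pe a) ∧ 0 ≤ height x ∧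
      height x + weight a < ∑ k, weight k := by
  simp only [rauzyEdges, patchEdges, Set.mem_iUnion] at he
  obtain ⟨i, ⟨t, k⟩, hr, he⟩ := he
  obtain ⟨hnonneg, hlt⟩ := height_mem_Ico_of_mem_patch hr
  obtain ⟨a, b, hab, hak, hbk, he⟩ := mem_sides.1 he
  have hsum := sum_univ_eq_add_add weight hab hak hbk
  have := weight_pos b
  obtain rfl | rfl := he
  · exact ⟨t, a, rfl, hnonneg, by linarith⟩
  · refine ⟨_, a, rfl, ?_⟩
    rw [map_add, height_single]
    constructor <;> linarith

lemma degree_rauzyEdges (p : ℝ × ℝ) :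
    degree rauzyEdges p = (inDirs rauzyEdges p).ncard + (outDirs rauzyEdges p).ncard := by
  refine degree_eq_ncard_inDirs_add_ncard_outDirs (fun e he => ?_) p
  obtain ⟨x, a, rfl, -⟩ := exists_height_of_mem_rauzyEdges he
  exact ⟨_, a, rfl⟩

lemma degree_patchEdges (i : ℕ) (p : ℝ × ℝ) : degree (patchEdges i) p =
    (inDirs (patchEdges i) p).ncard + (outDirs (patchEdges i) p).ncard := by
  refine degree_eq_ncard_inDirs_add_ncard_outDirs (fun e he => ?_) p
  obtain ⟨x, a, rfl, -⟩ := exists_height_of_mem_rauzyEdges (Set.mem_iUnion.2 ⟨i, he⟩)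
  exact ⟨_, a, rfl⟩

lemma height_add_weight_lt_of_mem_outDirs (hx : x ∈ strip)
    (ha : a ∈ outDirs rauzyEdges (projZ x)) : height x + weight a < ∑ k, weight k := by
  obtain ⟨y, b, hedge, hy, hlt⟩ := exists_height_of_mem_rauzyEdges ha
  obtain ⟨hproj, rfl⟩ := edge_eq_edge_iff.1 hedge
  have hy_strip : y ∈ strip := ⟨hy, by linarith [weight_pos a]⟩
  rwa [projZ_injOn_strip hx hy_strip hproj]

lemma weight_le_height_of_mem_inDirs (hx : x ∈ strip)
    (ha : a ∈ inDirs rauzyEdges (projZ x)) : weight a ≤ height x := by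
  obtain ⟨y, b, hedge, hy, hlt⟩ := exists_height_of_mem_rauzyEdges ha
  rw [← sub_add_cancel (projZ x) (pe a), add_sub_cancel_right] at hedge
  obtain ⟨hproj, rfl⟩ := edge_eq_edge_iff.1 hedge
  have hheight : height (y + Pi.single a 1) = height y + weight a := by simp
  have hy_strip : y + Pi.single a 1 ∈ strip := by
    refine ⟨?_, ?_⟩ <;> rw [hheight]
    exacts [add_nonneg hy (weight_pos a).le, hlt]
  rw [projZ_injOn_strip hx hy_strip (by rw [projZ_add_single, ← hproj, sub_add_cancel]), hheight]
  exact le_add_of_nonneg_left hy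

lemma ncard_le_three (A : Set (Fin 3)) : A.ncard ≤ 3 := by
  simpa using Set.ncard_le_card A

lemma degree_rauzyEdges_le_six (p : ℝ × ℝ) : degree rauzyEdges p ≤ 6 := by
  rw [degree_rauzyEdges]
  exact add_le_add (ncard_le_three _) (ncard_le_three _)

lemma height_bounds_of_degree_eq_six (hx : x ∈ strip) (hdeg : degree rauzyEdges (projZ x) = 6) :
    1 ≤ height x ∧ height x + 1 < ∑ k, weight k := by
  rw [degree_rauzyEdges] at hdeg
  have hin_le := ncard_le_three (inDirs rauzyEdges (projZ x))
  have hout_le := ncard_le_three (outDirs rauzyEdges (projZ x))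
  have hin : inDirs rauzyEdges (projZ x) = Set.univ :=
    (Set.eq_univ_iff_ncard _).2 (by rw [Nat.card_fin]; omega)
  have hout : outDirs rauzyEdges (projZ x) = Set.univ :=
    (Set.eq_univ_iff_ncard _).2 (by rw [Nat.card_fin]; omega)
  exact ⟨weight_le_height_of_mem_inDirs (a := 0) hx (hin ▸ Set.mem_univ 0),
    height_add_weight_lt_of_mem_outDirs (a := 0) hx (hout ▸ Set.mem_univ 0)⟩

lemma mem_outDirs_base (h : (t, k) ∈ patch i) (hak : a ≠ k) :
    a ∈ outDirs (patchEdges i) (projZ t) := by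
  obtain ⟨b, hba, hbk⟩ := Fin.exists_ne_and_ne_of_two_lt a k (by decide)
  exact Set.mem_biUnion h (mem_sides.2 ⟨a, b, hba.symm, hak, hbk, .inl rfl⟩)

lemma mem_outDirs_acute (h : (t, k) ∈ patch i) (hab : a ≠ b) (hak : a ≠ k) (hbk : b ≠ k) :
    a ∈ outDirs (patchEdges i) (projZ (t + Pi.single b 1)) :=
  Set.mem_biUnion h (mem_sides.2 ⟨a, b, hab, hak, hbk, .inr rfl⟩)

lemma mem_inDirs_acute (h : (t, k) ∈ patch i) (hak : a ≠ k) :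
    a ∈ inDirs (patchEdges i) (projZ (t + Pi.single a 1)) := by
  rw [projZ_add_single, mem_inDirs_add]
  exact mem_outDirs_base h hak

lemma mem_inDirs_top (h : (t, k) ∈ patch i) (hab : a ≠ b) (hak : a ≠ k) (hbk : b ≠ k) :
    b ∈ inDirs (patchEdges i) (projZ (t + Pi.single a 1 + Pi.single b 1)) := by
  rw [projZ_add_single, mem_inDirs_add]
  exact mem_outDirs_acute h hab.symm hbk hak

end Edges

/-! ### Vertices of a patch -/

section Vertices

variable {i : ℕ} {t : Fin 3 → ℤ} {j k : Fin 3} {z : ℝ × ℝ}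

lemma one_le_ncard_of_mem {α : Type*} [Finite α] {A : Set α} {x : α} (hx : x ∈ A) :
    1 ≤ A.ncard :=
  Nat.one_le_iff_ne_zero.2 (Set.ncard_ne_zero_of_mem hx)

lemma two_le_ncard_of_mem {α : Type*} [Finite α] {A : Set α} {x y : α} (hx : x ∈ A) (hy : y ∈ A)
    (hxy : x ≠ y) : 2 ≤ A.ncard :=
  Set.one_lt_ncard_iff_nontrivial.2 ⟨x, hx, y, hy, hxy⟩

lemma two_le_degree_patchEdges (hz : IsPatchVertex i z) : 2 ≤ degree (patchEdges i) z := by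
  obtain ⟨⟨t, k⟩, hr, hz⟩ := hz
  rw [degree_patchEdges]
  obtain rfl | ⟨j, hjk, rfl⟩ | ⟨a, b, hab, hak, hbk, rfl⟩ := eq_of_mem_corners hz
  · obtain ⟨a, b, hab, hak, hbk, -⟩ := exists_spanVecs_eq k
    exact le_add_left
      (two_le_ncard_of_mem (mem_outDirs_base hr hak) (mem_outDirs_base hr hbk) hab)
  · obtain ⟨l, hlj, hlk⟩ := Fin.exists_ne_and_ne_of_two_lt j k (by decide)
    exact add_le_add (one_le_ncard_of_mem (mem_inDirs_acute hr hjk))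
      (one_le_ncard_of_mem (mem_outDirs_acute hr hlj hlk hjk))
  · have ha : a ∈ inDirs (patchEdges i) (projZ (t + Pi.single a 1 + Pi.single b 1)) :=
      add_right_comm t (Pi.single b 1) (Pi.single a 1) ▸ mem_inDirs_top hr hab.symm hbk hak
    exact le_add_right (two_le_ncard_of_mem ha (mem_inDirs_top hr hab hak hbk) hab)

lemma three_le_degree_patchEdges_acute (hr : (t, k) ∈ patch i) (hjk : j ≠ k)
    (hle : weight k ≤ height (t + Pi.single j 1)) :
    3 ≤ degree (patchEdges i) (projZ (t + Pi.single j 1)) := by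
  obtain ⟨l, hlj, hlk⟩ := Fin.exists_ne_and_ne_of_two_lt j k (by decide)
  have hin := mem_inDirs_acute hr hjk
  have hout := mem_outDirs_acute hr hlj hlk hjk
  rw [degree_patchEdges]
  obtain rfl | hneighbor := eq_zero_or_acuteNeighbor_mem_patch hr hjk hle
  · have hout' := mem_outDirs_acute (zero_mem_patch i l) hjk.symm hlk.symm hlj.symm
    exact add_le_add (one_le_ncard_of_mem hin) (two_le_ncard_of_mem hout hout' hlk)
  · have hin' := mem_inDirs_acute hneighbor hjk.symm
    rw [sub_add_cancel] at hin'
    exact add_le_add (two_le_ncard_of_mem hin hin' hjk) (one_le_ncard_of_mem hout)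

lemma three_le_degree_patchEdges_of_degree_eq_six (hz : IsPatchVertex i z)
    (hdeg : degree rauzyEdges z = 6) : 3 ≤ degree (patchEdges i) z := by
  obtain ⟨⟨t, k⟩, hr, hz⟩ := hz
  obtain ⟨hnonneg, hlt⟩ := height_mem_Ico_of_mem_patch hr
  have hk_le := weight_le_one k
  have hpos := weight_pos
  obtain rfl | ⟨j, hjk, rfl⟩ | ⟨a, b, hab, hak, hbk, rfl⟩ := eq_of_mem_corners hz
  · have hstrip : t ∈ strip :=
      ⟨hnonneg, hlt.trans_le (Finset.single_le_sum (fun a _ => (hpos a).le) (Finset.mem_univ k))⟩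
    linarith [(height_bounds_of_degree_eq_six hstrip hdeg).1]
  · obtain ⟨l, hlj, hlk⟩ := Fin.exists_ne_and_ne_of_two_lt j k (by decide)
    have hsum := sum_univ_eq_add_add weight hlj hlk hjk
    have hstrip : t + Pi.single j 1 ∈ strip := by
      simp only [mem_strip, map_add, height_single]
      constructor <;> linarith [hpos j, hpos l]
    exact three_le_degree_patchEdges_acute hr hjk
      (hk_le.trans (height_bounds_of_degree_eq_six hstrip hdeg).1)
  · have hsum := sum_univ_eq_add_add weight hab hak hbk
    have hstrip : t + Pi.single a 1 + Pi.single b 1 ∈ strip := by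
      simp only [mem_strip, map_add, height_single]
      constructor <;> linarith [hpos a, hpos b]
    have htop := (height_bounds_of_degree_eq_six hstrip hdeg).2
    simp only [map_add, height_single] at htop
    linarith

end Vertices

end Rauzy

/-- **Statement 12** (Bound on `(k,n)`-vertices, Lemma `nkvertice`).
For every `i ≥ 0` and every vertex `z` of `Q_i`, if `z` is an `n`-vertex in the full
Rauzy quiver `Q` and a `k`-vertex in `Q_i` (a `(k,n)`-vertex), then `n - k ≤ 3`;
equivalently, no `(2,6)`-vertex occurs in any `Q_i`. -/
theorem statement12 (i : ℕ) (z : ℝ × ℝ) (hz : IsPatchVertex i z) (n K : ℕ)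
    (hn : degree rauzyEdges z = n) (hk : degree (patchEdges i) z = K) :
    n - K ≤ 3 ∧ ¬(K = 2 ∧ n = 6) := by
  have hn_le := Rauzy.degree_rauzyEdges_le_six z
  have hK_ge := Rauzy.two_le_degree_patchEdges hz
  have hK_of_six := Rauzy.three_le_degree_patchEdges_of_degree_eq_six hz
  omega
end
end
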